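/- For every ε > 0 there exists X > 0 such that for every fundamental negative discriminant D with |D| ≥ X one has 𝓛_D ≥ (1/4 − ε) · log|D|. -/

import Mathlib

/-!
Since `𝓛_D = (1/2) log |D| + L'/L(1, χ)`, the claim is `-L'/L(1, χ) ≤ (1/4 + ε) log |D|` for large
`|D|`. Put `N = |D|` and

  `G(z) = L(1 - z, χ) / L(1 + z, χ) * N ^ (-z / 2)`,

so that `G(0) = 1` and `G'(0) = -2 L'/L(1, χ) - (log N) / 2`; what has to be shown is
`G'(0) ≤ O(ε log N)`. The function `G` is holomorphic on `re z ≥ 0`, as `L(s, χ)` has no zeros in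
`re s ≥ 1`. Possible zeros of `L` to the left of `1` are zeros of `G` and do no harm.

* On the imaginary axis `|G| = 1`, because `χ` is real (`LFunction_conj`).
* On `|z| = 1/2`, `re z > 0`, one has `|G(z)| ≤ C_η N ^ (2 η) / re z` for every `η > 0`. The numerator
  is controlled by the convexity bound `L(1 - z) ≪ N ^ (re z / 2 + 2 η)` (`norm_LFunction_le`), which
  follows from the Pólya–Vinogradov inequality (`polyaVinogradov`) by partial summation; the
  denominator by `|L(1 + z)|⁻¹ ≤ 1 + 1 / re z` (`one_le_norm_LFunction_mul`).

A maximum principle on the half disc (`halfDisc_deriv`) then bounds `re G'(0)` by a constant times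
`log (C_η N ^ (2 η))`, that is by `48 η log N + O_η(1)` (`neg_deriv_le`), and `η` is chosen to be at
most `ε / 48`.
-/

open Complex UpperHalfPlane NumberField MeasureTheory
open scoped nonZeroDivisors Real

noncomputable section

def IsFundamentalNegDiscriminant (D : ℤ) : Prop :=
  D < 0 ∧ ((D % 4 = 1 ∧ Squarefree D) ∨
    (D % 4 = 0 ∧ Squarefree (D / 4) ∧ (D / 4 % 4 = 2 ∨ D / 4 % 4 = 3)))

def IsKroneckerChar (D : ℤ) (χ : DirichletCharacter ℂ (Int.natAbs D)) : Prop :=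
  (∀ n : ZMod (Int.natAbs D), χ n = 0 ∨ χ n = 1 ∨ χ n = -1) ∧
    χ.IsPrimitive ∧ χ (-1) = -1

/-! ### Gauss sums and the Pólya–Vinogradov inequality -/

open ZMod in
/-- A real primitive character is, up to the factor `τ`, its own discrete Fourier transform;
transforming twice gives `τ ^ 2 = χ (-1) * N`. -/
lemma norm_gaussSum_sq {N : ℕ} [NeZero N] {χ : DirichletCharacter ℂ N} (hχ : χ.IsPrimitive)
    (hinv : χ⁻¹ = χ) : ‖gaussSum χ stdAddChar‖ ^ 2 = N := by
  set τ := gaussSum χ stdAddChar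
  have hft : ZMod.dft (χ : ZMod N → ℂ) = fun k ↦ τ * χ (-k) := by
    funext k
    rw [hχ.fourierTransform_eq_inv_mul_gaussSum, hinv, mul_comm]
  have h1 := congr_fun (ZMod.dft_dft (χ : ZMod N → ℂ)) 1
  rw [hft, ZMod.dft_const_mul, ZMod.dft_comp_neg (χ : ZMod N → ℂ), hft] at h1
  have h2 := congr_arg norm h1
  have h3 : ‖χ (-1)‖ = 1 := by
    simpa using χ.unit_norm_eq_one (-1)
  simp only [neg_neg, map_one, mul_one, norm_mul, smul_eq_mul, h3] at h2
  rw [sq, h2]; simp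

/-- For `0 < a < N`, `|e(a/N) - 1| = 2 sin (π a / N)` is at least `4 min(a, N - a) / N`. -/
lemma norm_stdAddChar_sub_one {N : ℕ} [NeZero N] (a : ZMod N) (ha : a ≠ 0) :
    2 / ‖ZMod.stdAddChar a - 1‖ ≤ N / 2 * ((a.val : ℝ)⁻¹ + ((N - a.val : ℕ) : ℝ)⁻¹) := by
  have hlt := ZMod.val_lt a
  have hpos : 0 < a.val := Nat.pos_of_ne_zero (by simpa using ha)
  have hN : (0 : ℝ) < N := by exact_mod_cast (NeZero.pos N)
  have hv : (0 : ℝ) < a.val := by exact_mod_cast hpos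
  have hw : (0 : ℝ) < ((N - a.val : ℕ) : ℝ) := by exact_mod_cast Nat.sub_pos_of_lt hlt
  have hsum : (a.val : ℝ) + ((N - a.val : ℕ) : ℝ) = N := by
    exact_mod_cast Nat.add_sub_cancel' hlt.le
  set v : ℝ := (a.val : ℝ) with hvdef
  set w : ℝ := ((N - a.val : ℕ) : ℝ)
  have hnorm : ‖(ZMod.stdAddChar a : ℂ) - 1‖ = 2 * |Real.sin (Real.pi * v / N)| := by
    have h1 : (ZMod.stdAddChar a : ℂ) = Complex.exp (Complex.I * ((2 * Real.pi * v / N : ℝ) : ℂ)) := by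
      rw [ZMod.stdAddChar_apply, ZMod.toCircle_apply]
      congr 1
      simp only [hvdef]
      push_cast
      ring
    rw [h1, Complex.norm_exp_I_mul_ofReal_sub_one, norm_mul, Real.norm_eq_abs, Real.norm_eq_abs]
    rw [abs_of_pos (by norm_num : (0 : ℝ) < 2)]
    congr 3
    ring
  have hpi := Real.pi_pos
  have key : ∀ t u : ℝ, 0 < t → 0 < u → t + u = N → t ≤ u →
      2 * t / N ≤ Real.sin (Real.pi * t / N) := by
    intro t u ht hu htu hle
    have := Real.mul_le_sin (x := Real.pi * t / N) (by positivity)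
      (by rw [div_le_div_iff₀ hN (by norm_num)]; nlinarith)
    refine le_trans (le_of_eq ?_) this
    field_simp
  have hsymm : Real.sin (Real.pi * v / N) = Real.sin (Real.pi * w / N) := by
    rw [← Real.sin_pi_sub]
    congr 1
    field_simp
    linarith
  rw [hnorm]
  rcases le_total v w with h | h
  · have hk := key v w hv hw hsum h
    have h0 : 0 < 2 * v / N := by positivity
    rw [abs_of_pos (by linarith)]
    calc 2 / (2 * Real.sin (Real.pi * v / N)) ≤ 2 / (2 * (2 * v / N)) := by gcongr
      _ = N / 2 * v⁻¹ := by field_simp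
      _ ≤ _ := by gcongr; linarith [inv_pos.mpr hw]
  · have hk := key w v hw hv (by linarith) h
    have h0 : 0 < 2 * w / N := by positivity
    rw [hsymm, abs_of_pos (by linarith)]
    calc 2 / (2 * Real.sin (Real.pi * w / N)) ≤ 2 / (2 * (2 * w / N)) := by gcongr
      _ = N / 2 * w⁻¹ := by field_simp
      _ ≤ _ := by gcongr; linarith [inv_pos.mpr hv]

lemma norm_sum_stdAddChar_le {N : ℕ} [NeZero N] (a : ZMod N) (ha : a ≠ 0) (m : ℕ) :
    ‖∑ k ∈ Finset.range m, (ZMod.stdAddChar (a * ((k : ZMod N) + 1)) : ℂ)‖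
      ≤ N / 2 * ((a.val : ℝ)⁻¹ + ((N - a.val : ℕ) : ℝ)⁻¹) := by
  refine le_trans ?_ (norm_stdAddChar_sub_one a ha)
  set z : ℂ := ZMod.stdAddChar a with hz
  have hz1 : z ≠ 1 := by
    intro h
    apply ha
    apply ZMod.injective_stdAddChar
    rw [← hz, h, AddChar.map_zero_eq_one]
  have hzn : ‖z‖ = 1 := by rw [hz, ZMod.stdAddChar_apply]; exact Circle.norm_coe _
  have h1 : ∀ k : ℕ, (ZMod.stdAddChar (a * ((k : ZMod N) + 1)) : ℂ) = z * z ^ k := by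
    intro k
    rw [mul_add, mul_one, AddChar.map_add_eq_mul, mul_comm a, ← nsmul_eq_mul,
      AddChar.map_nsmul_eq_pow, mul_comm]
  simp_rw [h1]
  rw [← Finset.mul_sum, geom_sum_eq hz1, norm_mul, hzn, one_mul, norm_div]
  gcongr
  calc ‖z ^ m - 1‖ ≤ ‖z ^ m‖ + ‖(1 : ℂ)‖ := norm_sub_le _ _
    _ = 2 := by rw [norm_pow, hzn]; norm_num

/-- The Pólya–Vinogradov inequality for a real primitive character; the sum is
`χ(1) + ⋯ + χ(m)`. -/
lemma polyaVinogradov {N : ℕ} [NeZero N] {χ : DirichletCharacter ℂ N} (hχ : χ.IsPrimitive)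
    (hinv : χ⁻¹ = χ) (hN : 1 < N) (m : ℕ) :
    ‖∑ k ∈ Finset.range m, χ ((k : ZMod N) + 1)‖ ≤ √N * (1 + Real.log N) := by
  have hNpos : (0 : ℝ) < N := by exact_mod_cast (NeZero.pos N)
  set τ := gaussSum χ ZMod.stdAddChar with hτ
  have hft : ZMod.dft (χ : ZMod N → ℂ) = fun k ↦ τ * χ (-k) := by
    funext k
    rw [hχ.fourierTransform_eq_inv_mul_gaussSum, hinv, mul_comm]
  have hτn : ‖τ‖ = √N := by
    rw [← norm_gaussSum_sq hχ hinv, Real.sqrt_sq (norm_nonneg _)]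
  have h1 : ∀ x : ZMod N, (N : ℂ) * χ x = ∑ a : ZMod N, τ * χ (-a) * ZMod.stdAddChar (a * x) := by
    intro x
    have h := congr_fun (ZMod.dft_dft (χ : ZMod N → ℂ)) (-x)
    rw [ZMod.dft_apply, hft] at h
    simp only [neg_neg, smul_eq_mul, mul_neg] at h
    rw [← h]
    exact Finset.sum_congr rfl fun a _ ↦ mul_comm _ _
  have h2 : (N : ℂ) * ∑ k ∈ Finset.range m, χ ((k : ZMod N) + 1) =
      ∑ a : ZMod N, τ * χ (-a) *
        ∑ k ∈ Finset.range m, (ZMod.stdAddChar (a * ((k : ZMod N) + 1)) : ℂ) := by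
    rw [Finset.mul_sum]
    simp_rw [h1, Finset.mul_sum]
    exact Finset.sum_comm
  have hχ0 : χ 0 = 0 := χ.map_zero' hN.ne'
  have hH : ∑ k ∈ Finset.range (N - 1), ((k + 1 : ℕ) : ℝ)⁻¹ ≤ 1 + Real.log N := by
    have h := harmonic_le_one_add_log (N - 1)
    rw [harmonic_eq_sum_Icc] at h
    push_cast at h
    have h' : ∑ k ∈ Finset.range (N - 1), ((k + 1 : ℕ) : ℝ)⁻¹ = ∑ i ∈ Finset.Icc 1 (N - 1), (i : ℝ)⁻¹ := by
      rw [Finset.range_eq_Ico, Finset.sum_Ico_add' (fun k : ℕ ↦ (k : ℝ)⁻¹) 0 (N - 1) 1]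
      rfl
    rw [h']
    refine h.trans ?_
    gcongr
    · exact_mod_cast Nat.sub_pos_of_lt hN
    · exact Nat.sub_le _ _
  have hsumZ : ∀ f : ℕ → ℝ, ∑ a ∈ Finset.univ.erase (0 : ZMod N), f a.val
      = ∑ k ∈ Finset.range (N - 1), f (k + 1) := by
    intro f
    symm
    refine Finset.sum_bij (fun k _ ↦ ((k + 1 : ℕ) : ZMod N)) ?_ ?_ ?_ ?_
    · intro k hk
      rw [Finset.mem_range] at hk
      simp only [Finset.mem_erase, Finset.mem_univ, and_true, ne_eq]
      rw [ZMod.natCast_eq_zero_iff]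
      exact Nat.not_dvd_of_pos_of_lt (Nat.succ_pos _) (by omega)
    · intro k hk l hl h
      rw [Finset.mem_range] at hk hl
      have := congr_arg ZMod.val h
      rw [ZMod.val_natCast_of_lt (by omega), ZMod.val_natCast_of_lt (by omega)] at this
      omega
    · intro a ha
      have hlt := ZMod.val_lt a
      have hpos : 0 < a.val := Nat.pos_of_ne_zero (by simpa using ha)
      refine ⟨a.val - 1, by rw [Finset.mem_range]; omega, ?_⟩
      rw [Nat.sub_add_cancel hpos, ZMod.natCast_zmod_val]
    · intro k hk
      rw [Finset.mem_range] at hk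
      rw [ZMod.val_natCast_of_lt (by omega)]
  have hrefl : ∑ k ∈ Finset.range (N - 1), ((N - (k + 1) : ℕ) : ℝ)⁻¹
      = ∑ k ∈ Finset.range (N - 1), ((k + 1 : ℕ) : ℝ)⁻¹ := by
    rw [← Finset.sum_range_reflect]
    refine Finset.sum_congr rfl fun k hk ↦ ?_
    rw [Finset.mem_range] at hk
    congr 2
    omega
  have h3 : (N : ℝ) * ‖∑ k ∈ Finset.range m, χ ((k : ZMod N) + 1)‖ ≤
      N * (√N * (1 + Real.log N)) := by
    calc (N : ℝ) * ‖∑ k ∈ Finset.range m, χ ((k : ZMod N) + 1)‖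
        = ‖(N : ℂ) * ∑ k ∈ Finset.range m, χ ((k : ZMod N) + 1)‖ := by simp
      _ ≤ ∑ a ∈ Finset.univ.erase (0 : ZMod N),
          √N * (N / 2 * ((a.val : ℝ)⁻¹ + ((N - a.val : ℕ) : ℝ)⁻¹)) := by
        rw [h2, ← Finset.sum_erase (a := (0 : ZMod N)) Finset.univ (by simp [hχ0])]
        refine norm_sum_le_of_le _ fun a ha ↦ ?_
        rw [norm_mul, norm_mul, hτn]
        have := norm_sum_stdAddChar_le a (Finset.ne_of_mem_erase ha) m
        have h1 := χ.norm_le_one (-a)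
        calc _ ≤ √N * 1 * (N / 2 * ((a.val : ℝ)⁻¹ + ((N - a.val : ℕ) : ℝ)⁻¹)) := by gcongr
          _ = _ := by ring
      _ = √N * (N / 2 * (2 * ∑ k ∈ Finset.range (N - 1), ((k + 1 : ℕ) : ℝ)⁻¹)) := by
        rw [hsumZ (fun v ↦ √N * (N / 2 * ((v : ℝ)⁻¹ + ((N - v : ℕ) : ℝ)⁻¹))),
          ← Finset.mul_sum, ← Finset.mul_sum, Finset.sum_add_distrib, hrefl, two_mul]
      _ ≤ √N * (N / 2 * (2 * (1 + Real.log N))) := by gcongr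
      _ = _ := by ring
  exact le_of_mul_le_mul_left h3 hNpos

/-! ### A maximum principle on the half disc -/

/-- If `‖K‖ ≤ 1` on the boundary of the half disc and `K 0 = 1`, then `re K ≤ 1 = re (K 0)` on the
positive real axis, so `re K'(0) ≤ 0`. -/
lemma halfDisc_max {K : ℂ → ℂ} (hd : ∀ z : ℂ, 0 ≤ z.re → ‖z‖ ≤ 1 / 2 → DifferentiableAt ℂ K z)
    (hline : ∀ z : ℂ, z.re = 0 → ‖z‖ ≤ 1 / 2 → ‖K z‖ ≤ 1)
    (harc : ∀ z : ℂ, 0 < z.re → ‖z‖ = 1 / 2 → ‖K z‖ ≤ 1) (h0 : K 0 = 1) :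
    (deriv K 0).re ≤ 0 := by
  set U : Set ℂ := {z | 0 < z.re} ∩ Metric.ball 0 (1 / 2) with hU
  have hUo : IsOpen U := (isOpen_lt continuous_const Complex.continuous_re).inter Metric.isOpen_ball
  have hcl : closure U ⊆ {z | 0 ≤ z.re ∧ ‖z‖ ≤ 1 / 2} := by
    refine closure_minimal ?_ ?_
    · rintro z ⟨h1, h2⟩
      rw [mem_ball_zero_iff] at h2
      exact ⟨le_of_lt h1, h2.le⟩
    · exact (isClosed_le continuous_const Complex.continuous_re).inter
        (isClosed_le continuous_norm continuous_const)
  have hbd : ∀ z ∈ frontier U, ‖K z‖ ≤ 1 := by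
    intro z hz
    rw [frontier, hUo.interior_eq] at hz
    obtain ⟨hz1, hz2⟩ := hcl hz.1
    rcases hz1.eq_or_lt with h | h
    · exact hline z h.symm hz2
    · refine harc z h (le_antisymm hz2 (not_lt.mp fun hlt ↦ hz.2 ⟨h, ?_⟩))
      rwa [mem_ball_zero_iff]
  have hdc : DiffContOnCl ℂ K U :=
    DifferentiableOn.diffContOnCl fun z hz ↦
      (hd z (hcl hz).1 (hcl hz).2).differentiableWithinAt
  have hmax : ∀ z ∈ U, ‖K z‖ ≤ 1 := fun z hz ↦
    Complex.norm_le_of_forall_mem_frontier_norm_le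
      (Metric.isBounded_ball.subset Set.inter_subset_right) hdc hbd (subset_closure hz)
  have hder : HasDerivAt (fun x : ℝ ↦ (K x).re) (deriv K 0).re 0 := by
    have h := (hd 0 (by simp) (by simp)).hasDerivAt
    exact HasDerivAt.real_of_complex (z := (0 : ℝ)) (by simpa using h)
  have hlim := (hasDerivAt_iff_tendsto_slope_zero.mp hder).mono_left
    (nhdsWithin_mono (0 : ℝ) (show Set.Ioi (0 : ℝ) ⊆ {0}ᶜ from fun x hx ↦ ne_of_gt hx))
  refine le_of_tendsto hlim ?_
  filter_upwards [Ioo_mem_nhdsGT (show (0 : ℝ) < 1 / 2 by norm_num)] with x hx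
  have hx2 : ‖K x‖ ≤ 1 := by
    refine hmax _ ⟨by simpa using hx.1, ?_⟩
    rw [mem_ball_zero_iff, Complex.norm_real, Real.norm_eq_abs, abs_of_pos hx.1]
    exact hx.2
  have h3 : (K x).re ≤ 1 := (Complex.re_le_norm _).trans hx2
  simp only [zero_add, Complex.ofReal_zero, h0, Complex.one_re, smul_eq_mul]
  exact mul_nonpos_of_nonneg_of_nonpos (inv_nonneg.mpr hx.1.le) (by linarith)

/-- A derivative bound at the midpoint of the diameter of a half disc, logarithmic in the bound `M`
on the arc. The maximum principle is applied to `G z * (1 + 4 z²) ^ (m + 1) * exp (-2 A z)`. On the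
arc `|1 + 4 z²| = 4 re z`, which absorbs the blow-up of `M / re z` at the corners and, for
`m ≈ log (4 M)`, makes the product small there; away from the corners the exponential does so.
Both factors have norm at most `1` on the diameter, and the polynomial one does not affect the
derivative at `0`. -/
lemma halfDisc_deriv {G : ℂ → ℂ} {M : ℝ} (hM : 1 ≤ M)
    (hd : ∀ z : ℂ, 0 ≤ z.re → ‖z‖ ≤ 1 / 2 → DifferentiableAt ℂ G z)
    (hline : ∀ z : ℂ, z.re = 0 → ‖z‖ ≤ 1 / 2 → ‖G z‖ ≤ 1)
    (harc : ∀ z : ℂ, 0 < z.re → ‖z‖ = 1 / 2 → ‖G z‖ ≤ M / z.re) (h0 : G 0 = 1) :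
    (deriv G 0).re ≤ 24 * Real.log (4 * M) + 12 := by
  set L := Real.log (4 * M) with hL
  have hL0 : 0 < L := Real.log_pos (by linarith)
  set m : ℕ := ⌈L⌉₊ with hm
  have hm1 : L ≤ m := Nat.le_ceil _
  have hm2 : (m : ℝ) < L + 1 := Nat.ceil_lt_add_one hL0.le
  set A : ℝ := 6 * (L + m) with hA
  have hexpL : Real.exp L = 4 * M := Real.exp_log (by linarith)
  have hexp1 : Real.exp 1 < 3 := by linarith [Real.exp_one_lt_d9]
  set B : ℂ → ℂ := fun z ↦ (1 + 4 * z ^ 2) ^ (m + 1) * Complex.exp (-(2 * A * z)) with hB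
  have hBd : ∀ z, HasDerivAt B
      (((m + 1 : ℕ) * (1 + 4 * z ^ 2) ^ m * (4 * (2 * z))) * Complex.exp (-(2 * A * z)) +
        (1 + 4 * z ^ 2) ^ (m + 1) * (Complex.exp (-(2 * A * z)) * -(2 * A))) z := by
    intro z
    have h1 : HasDerivAt (fun z : ℂ ↦ (1 + 4 * z ^ 2)) (4 * (2 * z)) z := by
      simpa using ((hasDerivAt_pow 2 z).const_mul (4 : ℂ)).const_add 1
    have h2 : HasDerivAt (fun z : ℂ ↦ Complex.exp (-(2 * A * z)))
        (Complex.exp (-(2 * A * z)) * -(2 * A)) z := by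
      have : HasDerivAt (fun z : ℂ ↦ -(2 * A * z)) (-(2 * A)) z := by
        simpa using ((hasDerivAt_id z).const_mul (2 * (A : ℂ))).fun_neg
      exact this.cexp
    simpa using (h1.fun_pow (m + 1)).fun_mul h2
  have hB0 : B 0 = 1 := by simp [hB]
  have hBnorm : ∀ z : ℂ, ‖B z‖ = ‖1 + 4 * z ^ 2‖ ^ (m + 1) * Real.exp (-(2 * A * z.re)) := by
    intro z
    rw [hB]
    simp only [norm_mul, norm_pow, Complex.norm_exp]
    congr 2
    simp
  have hKd : (deriv (fun z ↦ G z * B z) 0).re ≤ 0 := by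
    refine halfDisc_max (fun z h1 h2 ↦ (hd z h1 h2).mul (hBd z).differentiableAt) ?_ ?_ ?_
    · intro z h1 h2
      rw [norm_mul]
      refine mul_le_one₀ (hline z h1 h2) (norm_nonneg _) ?_
      rw [hBnorm, h1]
      simp only [mul_zero, neg_zero, Real.exp_zero, mul_one]
      refine pow_le_one₀ (norm_nonneg _) ?_
      have hz : z = z.im * Complex.I := by
        apply Complex.ext <;> simp [h1]
      have hn : ‖z‖ = |z.im| := by
        rw [hz]; simp
      have hy : z.im ^ 2 ≤ 1 / 4 := by
        rw [hn, abs_le] at h2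
        nlinarith
      have : 1 + 4 * z ^ 2 = ((1 - 4 * z.im ^ 2 : ℝ) : ℂ) := by
        rw [hz, mul_pow, Complex.I_sq]; push_cast; simp; ring
      rw [this, Complex.norm_real, Real.norm_eq_abs, abs_le]
      constructor <;> nlinarith [sq_nonneg z.im]
    · intro z h1 h2
      set x := z.re with hx
      have hxle : x ≤ 1 / 2 := h2 ▸ Complex.re_le_norm z
      have hsq : x ^ 2 + z.im ^ 2 = 1 / 4 := by
        have := Complex.sq_norm z
        rw [h2, Complex.normSq_apply] at this
        rw [hx]; linarith
      have h4 : ‖1 + 4 * z ^ 2‖ = 4 * x := by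
        have hne : 1 + 4 * z ^ 2 = ((4 * x : ℝ) : ℂ) * (2 * z) := by
          apply Complex.ext
          · simp [pow_two, ← hx]; nlinarith
          · simp [pow_two, ← hx]; ring
        rw [hne, norm_mul, norm_mul, h2, Complex.norm_real, Real.norm_eq_abs,
          abs_of_pos (by linarith)]
        norm_num
      rw [norm_mul, hBnorm, h4, ← hx]
      calc ‖G z‖ * ((4 * x) ^ (m + 1) * Real.exp (-(2 * A * x)))
          ≤ M / x * ((4 * x) ^ (m + 1) * Real.exp (-(2 * A * x))) := by
            gcongr; exact harc z h1 h2
        _ = Real.exp L * (4 * x) ^ m * Real.exp (-(2 * A * x)) := by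
            rw [hexpL]; field_simp; ring
        _ ≤ 1 := by
          -- `4 x ≤ 1 / 3 < e⁻¹` near the corners, and `2 A x ≥ L + m` away from them.
          rcases le_total x (1 / 12) with h | h
          · have ha : (4 * x) ^ m ≤ Real.exp (-L) := by
              calc (4 * x) ^ m ≤ (Real.exp (-1)) ^ m := by
                    gcongr
                    rw [Real.exp_neg]
                    refine le_trans (by linarith : 4 * x ≤ 1 / 3) ?_
                    rw [one_div]
                    exact inv_anti₀ (Real.exp_pos _) hexp1.le
                _ = Real.exp (-m) := by rw [← Real.exp_nat_mul]; congr 1; ring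
                _ ≤ _ := Real.exp_le_exp.mpr (by linarith)
            have hb : Real.exp (-(2 * A * x)) ≤ 1 := by
              rw [Real.exp_le_one_iff]
              have : 0 ≤ 2 * A * x := by positivity
              linarith
            calc Real.exp L * (4 * x) ^ m * Real.exp (-(2 * A * x))
                ≤ Real.exp L * Real.exp (-L) * 1 := by gcongr
              _ = 1 := by rw [← Real.exp_add]; simp
          · have ha : (4 * x) ^ m ≤ Real.exp m := by
              calc (4 * x) ^ m ≤ (Real.exp 1) ^ m := by
                    gcongr
                    linarith [Real.exp_one_gt_d9]
                _ = _ := by rw [← Real.exp_nat_mul]; simp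
            calc Real.exp L * (4 * x) ^ m * Real.exp (-(2 * A * x))
                ≤ Real.exp L * Real.exp m * Real.exp (-(2 * A * (1 / 12))) := by
                  gcongr
              _ = 1 := by
                rw [← Real.exp_add, ← Real.exp_add, Real.exp_eq_one_iff, hA]; ring
    · simp [h0, hB0]
  have hprod := (hd 0 (by simp) (by simp)).hasDerivAt.mul (hBd 0)
  have hprod' : deriv (fun z ↦ G z * B z) 0 = _ := hprod.deriv
  rw [hprod', hB0, h0] at hKd
  simp at hKd
  rw [hA] at hKd
  linarith

/-! ### Bounds for `L(s, χ)` -/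

lemma norm_cpow_sub_le (s : ℂ) (hs : 0 < s.re) (n : ℕ) :
    ‖((n : ℂ) + 1) ^ (-s) - ((n : ℂ) + 2) ^ (-s)‖ ≤ ‖s‖ * ((n : ℝ) + 1) ^ (-s.re - 1) := by
  have hder : ∀ x ∈ Set.Icc ((n : ℝ) + 1) (n + 2), HasDerivWithinAt (fun t : ℝ ↦ (t : ℂ) ^ (-s))
      (-s * (x : ℂ) ^ (-s - 1)) (Set.Icc ((n : ℝ) + 1) (n + 2)) x := by
    intro x hx
    have hx0 : 0 < x := lt_of_lt_of_le (by positivity) hx.1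
    have h := (hasDerivAt_id (x : ℂ)).cpow_const (c := -s) (Or.inl (by simpa using hx0))
    simpa using (h.comp_ofReal (z := x)).hasDerivWithinAt
  have hb : ∀ x ∈ Set.Ico ((n : ℝ) + 1) (n + 2),
      ‖-s * (x : ℂ) ^ (-s - 1)‖ ≤ ‖s‖ * ((n : ℝ) + 1) ^ (-s.re - 1) := by
    intro x hx
    have hx0 : 0 < x := lt_of_lt_of_le (by positivity) hx.1
    rw [norm_mul, norm_neg, Complex.norm_cpow_eq_rpow_re_of_pos hx0]
    simp only [Complex.sub_re, Complex.neg_re, Complex.one_re]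
    gcongr ‖s‖ * ?_
    exact Real.rpow_le_rpow_of_nonpos (by positivity) hx.1 (by linarith)
  have h := norm_image_sub_le_of_norm_deriv_le_segment' hder hb (n + 2)
    ⟨by linarith, le_refl _⟩
  rw [norm_sub_rev]
  refine le_trans (le_of_eq ?_) (h.trans (le_of_eq ?_))
  · push_cast; rfl
  · ring

lemma summable_rpow_shift {η : ℝ} (hη : 0 < η) :
    Summable fun n : ℕ ↦ ((n : ℝ) + 1) ^ (-(1 + η)) := by
  have h := (summable_nat_add_iff 1).mpr (Real.summable_nat_rpow.mpr (by linarith : -(1 + η) < -1))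
  simpa using h

lemma tsum_rpow_shift_le {η : ℝ} (hη : 0 < η) :
    ∑' n : ℕ, ((n : ℝ) + 1) ^ (-(1 + η)) ≤ 1 + 1 / η := by
  have h := ZetaAsymptotics.zeta_limit_aux1 (s := 1 + η) (by linarith)
  have h0 : 0 ≤ ZetaAsymptotics.termTSum (1 + η) := tsum_nonneg fun n ↦ ZetaAsymptotics.term_nonneg _ _
  have h1 : ∑' n : ℕ, ((n : ℝ) + 1) ^ (-(1 + η)) = ∑' n : ℕ, 1 / ((n : ℝ) + 1) ^ (1 + η) := by
    refine tsum_congr fun n ↦ ?_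
    rw [Real.rpow_neg (by positivity), one_div]
  rw [h1]
  have h2 : 0 ≤ (1 + η) * ZetaAsymptotics.termTSum (1 + η) := by positivity
  have h3 : 1 + η - 1 = η := by ring
  rw [h3] at h
  linarith

/-- Partial sums `χ(1) + ⋯ + χ(m)`. -/
def charSum {N : ℕ} (χ : DirichletCharacter ℂ N) (m : ℕ) : ℂ :=
  ∑ k ∈ Finset.range m, χ ((k : ZMod N) + 1)

/-- The terms of the series for `L(s, χ)` obtained by partial summation. -/
def abelTerm {N : ℕ} (χ : DirichletCharacter ℂ N) (n : ℕ) (s : ℂ) : ℂ :=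
  charSum χ (n + 1) * (((n : ℂ) + 1) ^ (-s) - ((n : ℂ) + 2) ^ (-s))

lemma norm_charSum_le {N : ℕ} (χ : DirichletCharacter ℂ N) (m : ℕ) : ‖charSum χ m‖ ≤ m := by
  refine (norm_sum_le_of_le _ fun k _ ↦ χ.norm_le_one _).trans ?_
  simp

/-- The partial sum is bounded both by `n + 1` and by `B`, hence by
`(n + 1) ^ (σ - η) * B ^ (1 - σ + η)`, with `σ = re s`. This exponent leaves the convergent series
`∑ (n + 1) ^ (-(1 + η))`. -/
lemma norm_abelTerm_le {N : ℕ} (χ : DirichletCharacter ℂ N) {B η : ℝ}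
    (hB : ∀ m, ‖charSum χ m‖ ≤ B) {s : ℂ} (hη : 0 < η) (hs : η ≤ s.re) (hs1 : s.re ≤ 1 + η) (n : ℕ) :
    ‖abelTerm χ n s‖ ≤ ‖s‖ * B ^ (1 - s.re + η) * ((n : ℝ) + 1) ^ (-(1 + η)) := by
  have hB0 : 0 ≤ B := (norm_nonneg _).trans (hB 0)
  have h1 := norm_cpow_sub_le s (by linarith) n
  have hn : (0 : ℝ) < (n : ℝ) + 1 := by positivity
  have h2 : ‖charSum χ (n + 1)‖ ≤ ((n : ℝ) + 1) ^ (s.re - η) * B ^ (1 - s.re + η) := by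
    set c := ‖charSum χ (n + 1)‖ with hc
    have hc0 : 0 ≤ c := norm_nonneg _
    have hc1 : c ≤ (n : ℝ) + 1 := by simpa using norm_charSum_le χ (n + 1)
    calc c = c ^ (s.re - η) * c ^ (1 - s.re + η) := by
          rw [← Real.rpow_add_of_nonneg hc0 (by linarith) (by linarith)]
          rw [show s.re - η + (1 - s.re + η) = 1 by ring, Real.rpow_one]
      _ ≤ _ := by
          gcongr
          · linarith
          · exact hB _
  rw [abelTerm, norm_mul]
  calc _ ≤ (((n : ℝ) + 1) ^ (s.re - η) * B ^ (1 - s.re + η)) *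
        (‖s‖ * ((n : ℝ) + 1) ^ (-s.re - 1)) := by gcongr
    _ = ‖s‖ * B ^ (1 - s.re + η) * (((n : ℝ) + 1) ^ (s.re - η) * ((n : ℝ) + 1) ^ (-s.re - 1)) := by
        ring
    _ = _ := by
        rw [← Real.rpow_add hn]; congr 2; ring

lemma norm_abelTerm_le' {N : ℕ} (χ : DirichletCharacter ℂ N) {B : ℝ}
    (hB : ∀ m, ‖charSum χ m‖ ≤ B) {s : ℂ} (hs : 0 < s.re) (n : ℕ) :
    ‖abelTerm χ n s‖ ≤ ‖s‖ * B * ((n : ℝ) + 1) ^ (-(1 + s.re)) := by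
  have h1 := norm_cpow_sub_le s hs n
  have hB0 : 0 ≤ B := (norm_nonneg _).trans (hB 0)
  rw [abelTerm, norm_mul]
  calc _ ≤ B * (‖s‖ * ((n : ℝ) + 1) ^ (-s.re - 1)) := by gcongr; exact hB _
    _ = _ := by rw [show -s.re - 1 = -(1 + s.re) by ring]; ring

lemma summable_abelTerm {N : ℕ} (χ : DirichletCharacter ℂ N) {B : ℝ}
    (hB : ∀ m, ‖charSum χ m‖ ≤ B) {s : ℂ} (hs : 0 < s.re) :
    Summable fun n ↦ abelTerm χ n s :=
  Summable.of_norm_bounded ((summable_rpow_shift hs).mul_left _) (norm_abelTerm_le' χ hB hs)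

lemma sum_abel {N : ℕ} (χ : DirichletCharacter ℂ N) (s : ℂ) (m : ℕ) :
    ∑ n ∈ Finset.range m, χ ((n : ZMod N) + 1) * ((n : ℂ) + 1) ^ (-s) =
      charSum χ m * ((m : ℂ) + 1) ^ (-s) + ∑ n ∈ Finset.range m, abelTerm χ n s := by
  induction m with
  | zero => simp [charSum]
  | succ m ih =>
    rw [Finset.sum_range_succ, ih, Finset.sum_range_succ, abelTerm]
    have : charSum χ (m + 1) = charSum χ m + χ ((m : ZMod N) + 1) := Finset.sum_range_succ _ _
    rw [this]
    push_cast
    rw [show (m : ℂ) + 1 + 1 = m + 2 by ring]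
    ring

lemma LFunction_eq_tsum_of_one_lt {N : ℕ} [NeZero N] (χ : DirichletCharacter ℂ N) {B : ℝ}
    (hB : ∀ m, ‖charSum χ m‖ ≤ B) {s : ℂ} (hs : 1 < s.re) :
    χ.LFunction s = ∑' n, abelTerm χ n s := by
  have hs0 : s ≠ 0 := by rintro rfl; norm_num at hs
  have hsum := (DirichletCharacter.LSeriesSummable_of_one_lt_re χ hs).hasSum
  rw [← LSeries, ← χ.LFunction_eq_LSeries hs] at hsum
  have h1 : HasSum (fun n : ℕ ↦ χ ((n : ZMod N) + 1) * ((n : ℂ) + 1) ^ (-s)) (χ.LFunction s) := by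
    have := (hasSum_nat_add_iff' 1).mpr hsum
    simp only [Finset.sum_range_one, LSeries.term_zero, sub_zero] at this
    refine this.congr_fun fun n ↦ ?_
    rw [LSeries.term_of_ne_zero (Nat.succ_ne_zero n), div_eq_mul_inv, ← Complex.cpow_neg]
    push_cast; rfl
  have h2 := h1.tendsto_sum_nat
  simp_rw [sum_abel] at h2
  have h3 := (summable_abelTerm χ hB (by linarith : 0 < s.re)).hasSum.tendsto_sum_nat
  have h4 : Filter.Tendsto (fun m : ℕ ↦ charSum χ m * ((m : ℂ) + 1) ^ (-s)) Filter.atTop (nhds 0) := by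
    have h5 : Filter.Tendsto (fun m : ℕ ↦ B * ((m : ℝ) + 1) ^ (-s.re)) Filter.atTop (nhds 0) := by
      rw [← mul_zero B]
      refine Filter.Tendsto.const_mul B ?_
      exact (tendsto_rpow_neg_atTop (by linarith)).comp
        (Filter.tendsto_atTop_add_const_right _ _ tendsto_natCast_atTop_atTop)
    refine squeeze_zero_norm (fun m ↦ ?_) h5
    rw [norm_mul]
    have : ‖((m : ℂ) + 1) ^ (-s)‖ = ((m : ℝ) + 1) ^ (-s.re) := by
      have := Complex.norm_cpow_eq_rpow_re_of_pos (show (0 : ℝ) < (m : ℝ) + 1 by positivity) (-s)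
      push_cast at this
      simpa using this
    rw [this]
    gcongr
    exact hB m
  have h5 := h4.add h3
  rw [zero_add] at h5
  exact tendsto_nhds_unique h2 h5

/-- The partial summation series represents `L(s, χ)` in `re s > 0`, by analytic continuation from
`re s > 1`. -/
lemma LFunction_eq_tsum {N : ℕ} [NeZero N] {χ : DirichletCharacter ℂ N} (hχ : χ ≠ 1) {B : ℝ}
    (hB : ∀ m, ‖charSum χ m‖ ≤ B) {s : ℂ} (hs : 0 < s.re) :
    χ.LFunction s = ∑' n, abelTerm χ n s := by
  have hB0 : 0 ≤ B := (norm_nonneg _).trans (hB 0)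
  have hopen : IsOpen {z : ℂ | 0 < z.re} := isOpen_lt continuous_const Complex.continuous_re
  have hdiff : DifferentiableOn ℂ (fun s ↦ ∑' n, abelTerm χ n s) {z : ℂ | 0 < z.re} := by
    intro w hw
    have hw : 0 < w.re := hw
    set V : Set ℂ := {z | w.re / 2 < z.re} ∩ Metric.ball 0 (‖w‖ + 1) with hV
    have hVo : IsOpen V :=
      (isOpen_lt continuous_const Complex.continuous_re).inter Metric.isOpen_ball
    have hwV : w ∈ V := ⟨by simp only [Set.mem_ofPred_eq]; linarith, by simp⟩
    have hd : DifferentiableOn ℂ (fun s ↦ ∑' n, abelTerm χ n s) V := by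
      refine Complex.differentiableOn_tsum_of_summable_norm
        (u := fun n : ℕ ↦ (‖w‖ + 1) * B * ((n : ℝ) + 1) ^ (-(1 + w.re / 2)))
        ((summable_rpow_shift (by linarith)).mul_left _) ?_ hVo ?_
      · intro n
        have h1 : ((n : ℂ) + 1) ≠ 0 := by exact_mod_cast Nat.succ_ne_zero n
        have h2 : ((n : ℂ) + 2) ≠ 0 := by exact_mod_cast Nat.succ_ne_zero (n + 1)
        refine Differentiable.differentiableOn fun z ↦ ?_
        unfold abelTerm
        refine DifferentiableAt.const_mul ?_ _
        exact (differentiableAt_id.neg.const_cpow (Or.inl h1)).sub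
          (differentiableAt_id.neg.const_cpow (Or.inl h2))
      · rintro n z ⟨hz1, hz2⟩
        rw [mem_ball_zero_iff] at hz2
        have hz1 : w.re / 2 < z.re := hz1
        refine (norm_abelTerm_le' χ hB (by linarith) n).trans ?_
        gcongr
        · linarith [Nat.cast_nonneg (α := ℝ) n]
    exact ((hd w hwV).differentiableAt (hVo.mem_nhds hwV)).differentiableWithinAt
  have hpre : IsPreconnected {z : ℂ | 0 < z.re} :=
    (convex_halfSpace_re_gt 0).isPreconnected
  have hA := (χ.differentiable_LFunction hχ).differentiableOn.analyticOnNhd hopen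
  refine hA.eqOn_of_preconnected_of_eventuallyEq (hdiff.analyticOnNhd hopen) hpre
    (z₀ := 2) (by simp) ?_ hs
  have : {z : ℂ | 1 < z.re} ∈ nhds (2 : ℂ) :=
    (isOpen_lt continuous_const Complex.continuous_re).mem_nhds (by simp)
  filter_upwards [this] with z hz
  exact LFunction_eq_tsum_of_one_lt χ hB hz

/-- The convexity bound: with `B` of size `√N`, up to a factor `N ^ η`, it reads
`L(s, χ) ≪ N ^ ((1 - σ) / 2 + O(η))`. -/
lemma norm_LFunction_le {N : ℕ} [NeZero N] {χ : DirichletCharacter ℂ N} (hχ : χ ≠ 1) {B η : ℝ}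
    (hB : ∀ m, ‖charSum χ m‖ ≤ B) {s : ℂ} (hη : 0 < η) (hs : η ≤ s.re) (hs1 : s.re ≤ 1 + η) :
    ‖χ.LFunction s‖ ≤ ‖s‖ * B ^ (1 - s.re + η) * (1 + 1 / η) := by
  have hB0 : 0 ≤ B := (norm_nonneg _).trans (hB 0)
  rw [LFunction_eq_tsum hχ hB (by linarith)]
  refine (tsum_of_norm_bounded ((summable_rpow_shift hη).mul_left
    (‖s‖ * B ^ (1 - s.re + η))).hasSum (norm_abelTerm_le χ hB hη hs hs1)).trans ?_
  rw [tsum_mul_left]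
  gcongr
  exact tsum_rpow_shift_le hη

/-- The reflection principle for a real character. -/
lemma LFunction_conj {N : ℕ} [NeZero N] {χ : DirichletCharacter ℂ N} (hχ : χ ≠ 1) {B : ℝ}
    (hB : ∀ m, ‖charSum χ m‖ ≤ B) (hreal : ∀ n, (starRingEnd ℂ) (χ n) = χ n) {s : ℂ}
    (hs : 0 < s.re) :
    χ.LFunction ((starRingEnd ℂ) s) = (starRingEnd ℂ) (χ.LFunction s) := by
  rw [LFunction_eq_tsum hχ hB hs, LFunction_eq_tsum hχ hB (by simpa using hs), Complex.conj_tsum]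
  refine tsum_congr fun n ↦ ?_
  have hc : ∀ k : ℕ, k ≠ 0 → (starRingEnd ℂ) ((k : ℂ) ^ (-s)) = (k : ℂ) ^ (-(starRingEnd ℂ) s) := by
    intro k hk
    rw [← map_neg, Complex.cpow_conj _ _ (by rw [Complex.natCast_arg]; exact Real.pi_pos.ne)]
    simp
  have h1 := hc (n + 1) (Nat.succ_ne_zero n)
  have h2 := hc (n + 2) (Nat.succ_ne_zero _)
  push_cast at h1 h2
  simp only [abelTerm, charSum, map_mul, map_sub, map_sum, hreal, h1, h2]

/-- `|1 / L(s, χ)| = |∑ μ(n) χ(n) n ^ (-s)| ≤ ∑ n ^ (-σ) ≤ 1 + 1 / (σ - 1)`. -/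
lemma one_le_norm_LFunction_mul {N : ℕ} [NeZero N] (χ : DirichletCharacter ℂ N) {s : ℂ}
    (hs : 1 < s.re) : 1 ≤ ‖χ.LFunction s‖ * (1 + 1 / (s.re - 1)) := by
  have h := DirichletCharacter.LSeries.mul_mu_eq_one χ hs
  rw [← χ.LFunction_eq_LSeries hs] at h
  have h1 := congr_arg norm h
  rw [norm_mul, norm_one] at h1
  refine h1.symm.le.trans ?_
  gcongr
  set f : ℕ → ℂ := (fun n : ℕ ↦ χ n) * (fun n : ℕ ↦ ((ArithmeticFunction.moebius n : ℤ) : ℂ)) with hf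
  have hsm : LSeriesSummable f s :=
    DirichletCharacter.LSeriesSummable_mul χ (ArithmeticFunction.LSeriesSummable_moebius_iff.mpr hs)
  have h2 : LSeries f s = ∑' n, LSeries.term f s (n + 1) := by
    rw [LSeries, hsm.tsum_eq_zero_add]
    simp
  rw [h2]
  have h3 : 0 < s.re - 1 := by linarith
  refine (tsum_of_norm_bounded (summable_rpow_shift h3).hasSum fun n ↦ ?_).trans
    (tsum_rpow_shift_le h3)
  rw [LSeries.norm_term_eq, if_neg (Nat.succ_ne_zero n), div_eq_mul_inv, Real.rpow_neg (by positivity)]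
  have hle : ‖f (n + 1)‖ ≤ 1 := by
    rw [hf, Pi.mul_apply, norm_mul]
    refine mul_le_one₀ (χ.norm_le_one _) (norm_nonneg _) ?_
    rw [Complex.norm_intCast]
    exact_mod_cast ArithmeticFunction.abs_moebius_le_one
  rw [show 1 + (s.re - 1) = s.re by ring]
  push_cast
  calc _ ≤ 1 * (((n : ℝ) + 1) ^ s.re)⁻¹ := by gcongr
    _ = _ := one_mul _

/-! ### The lower bound for `L'/L(1, χ)` -/

/-- The lower bound for `L'/L(1)`, with an arbitrary loss `η`. It comes from `halfDisc_deriv` applied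
to `G z = L(1 - z) / L(1 + z) * N ^ (-z / 2)`, whose derivative at `0` is
`-2 * L'/L(1) - log N / 2`. -/
lemma neg_deriv_le {N : ℕ} [NeZero N] {χ : DirichletCharacter ℂ N} (hN : 1 < N)
    (hχ : χ.IsPrimitive) (hχ1 : χ ≠ 1) (hinv : χ⁻¹ = χ) (hreal : ∀ n, (starRingEnd ℂ) (χ n) = χ n)
    {η : ℝ} (hη : 0 < η) (hη2 : η ≤ 1 / 2) :
    -2 * (deriv χ.LFunction 1 / χ.LFunction 1).re - Real.log N / 2 ≤
      48 * η * Real.log N + (24 * Real.log (12 * (1 + 1 / η) ^ 2) + 12) := by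
  have hN1 : (1 : ℝ) < N := by exact_mod_cast hN
  have hNpos : (0 : ℝ) < N := by linarith
  set ℓ := Real.log N with hℓ
  have hℓ0 : 0 < ℓ := Real.log_pos hN1
  set C : ℝ := 1 + 1 / η with hC
  have hC1 : 1 ≤ C := by rw [hC]; linarith [show 0 < 1 / η by positivity]
  set B : ℝ := C * (N : ℝ) ^ (1 / 2 + η) with hBdef
  have hB : ∀ m, ‖charSum χ m‖ ≤ B := by
    intro m
    refine (polyaVinogradov hχ hinv hN m).trans ?_
    rw [hBdef, Real.sqrt_eq_rpow, Real.rpow_add hNpos]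
    have h1 := Real.log_le_rpow_div hNpos.le hη
    have h2 : 1 ≤ (N : ℝ) ^ η := Real.one_le_rpow hN1.le hη.le
    calc (N : ℝ) ^ (1 / 2 : ℝ) * (1 + Real.log N)
        ≤ (N : ℝ) ^ (1 / 2 : ℝ) * ((N : ℝ) ^ η + (N : ℝ) ^ η / η) := by gcongr
      _ = _ := by rw [hC]; field_simp
  set L := χ.LFunction with hL
  have hLd : Differentiable ℂ L := χ.differentiable_LFunction hχ1
  have hLne : ∀ s : ℂ, 1 ≤ s.re → L s ≠ 0 := fun s hs ↦
    DirichletCharacter.LFunction_ne_zero_of_one_le_re χ (Or.inl hχ1) hs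
  have hL1 : L 1 ≠ 0 := hLne 1 (by simp)
  -- `B ^ (x + η) ≤ C * N ^ (x / 2 + 2 * η)`, because `x + η ≤ 1` and `η ≤ 1 / 2`.
  have hleft : ∀ z : ℂ, 0 ≤ z.re → ‖z‖ = 1 / 2 →
      ‖L (1 - z)‖ ≤ 3 / 2 * C ^ 2 * Real.exp ((z.re / 2 + 2 * η) * ℓ) := by
    intro z h1 h2
    have hx : z.re ≤ 1 / 2 := h2 ▸ Complex.re_le_norm z
    have h := norm_LFunction_le hχ1 hB (s := 1 - z) hη (by simp; linarith) (by simp; linarith)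
    have hs : ‖1 - z‖ ≤ 3 / 2 := by
      refine (norm_sub_le _ _).trans ?_
      rw [h2, norm_one]; norm_num
    have he : 1 - (1 - z).re + η = z.re + η := by simp
    rw [he] at h
    have hBp : B ^ (z.re + η) ≤ C * Real.exp ((z.re / 2 + 2 * η) * ℓ) := by
      rw [hBdef, Real.mul_rpow (by positivity) (by positivity), ← Real.rpow_mul hNpos.le]
      gcongr
      · calc C ^ (z.re + η) ≤ C ^ (1 : ℝ) :=
              Real.rpow_le_rpow_of_exponent_le hC1 (by linarith)
          _ = C := Real.rpow_one C
      · rw [Real.rpow_def_of_pos hNpos, mul_comm]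
        refine Real.exp_le_exp.mpr ?_
        gcongr
        nlinarith
    calc ‖L (1 - z)‖ ≤ ‖1 - z‖ * B ^ (z.re + η) * (1 + 1 / η) := h
      _ ≤ 3 / 2 * (C * Real.exp ((z.re / 2 + 2 * η) * ℓ)) * C := by gcongr
      _ = _ := by ring
  set G : ℂ → ℂ := fun z ↦ L (1 - z) / L (1 + z) * Complex.exp (-(ℓ / 2 * z)) with hG
  have hGd : ∀ z : ℂ, 0 ≤ z.re → HasDerivAt G
      ((-deriv L (1 - z) * L (1 + z) - L (1 - z) * deriv L (1 + z)) / L (1 + z) ^ 2 *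
          Complex.exp (-(ℓ / 2 * z)) +
        L (1 - z) / L (1 + z) * (Complex.exp (-(ℓ / 2 * z)) * -(ℓ / 2))) z := by
    intro z hz
    have h1 : HasDerivAt (fun z ↦ L (1 - z)) (-deriv L (1 - z)) z := by
      simpa using (hLd (1 - z)).hasDerivAt.comp_const_sub 1 z
    have h2 : HasDerivAt (fun z ↦ L (1 + z)) (deriv L (1 + z)) z :=
      (hLd (1 + z)).hasDerivAt.comp_const_add 1 z
    have h3 : HasDerivAt (fun z : ℂ ↦ Complex.exp (-(ℓ / 2 * z)))
        (Complex.exp (-(ℓ / 2 * z)) * -(ℓ / 2)) z := by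
      have : HasDerivAt (fun z : ℂ ↦ -(ℓ / 2 * z)) (-(ℓ / 2 : ℂ)) z := by
        simpa using ((hasDerivAt_id z).const_mul (ℓ / 2 : ℂ)).fun_neg
      exact this.cexp
    exact (h1.fun_div h2 (hLne _ (by simpa using hz))).fun_mul h3
  have hexp : ∀ z : ℂ, ‖Complex.exp (-(ℓ / 2 * z))‖ = Real.exp (-(z.re / 2 * ℓ)) := by
    intro z
    rw [Complex.norm_exp]
    congr 1
    have : (-(ℓ / 2 * z) : ℂ) = ((-(ℓ / 2) : ℝ) : ℂ) * z := by push_cast; ring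
    rw [this, Complex.re_ofReal_mul]; ring
  set M : ℝ := 3 * C ^ 2 * Real.exp (2 * η * ℓ) with hM
  have hM1 : 1 ≤ M := by
    have h1 : 1 ≤ Real.exp (2 * η * ℓ) := Real.one_le_exp (by positivity)
    have h2 : 1 ≤ C ^ 2 := one_le_pow₀ hC1
    rw [hM]; nlinarith
  have hmain := halfDisc_deriv (G := G) hM1 (fun z hz _ ↦ (hGd z hz).differentiableAt) ?_ ?_ ?_
  · rw [(hGd 0 (by simp)).deriv] at hmain
    have hval : (-deriv L (1 - 0) * L (1 + 0) - L (1 - 0) * deriv L (1 + 0)) / L (1 + 0) ^ 2 *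
          Complex.exp (-(ℓ / 2 * 0)) +
        L (1 - 0) / L (1 + 0) * (Complex.exp (-(ℓ / 2 * 0)) * -(ℓ / 2)) =
        ((-2 : ℝ) : ℂ) * (deriv L 1 / L 1) - ((ℓ / 2 : ℝ) : ℂ) := by
      simp only [sub_zero, add_zero, mul_zero, neg_zero, Complex.exp_zero]
      push_cast
      field_simp
      ring
    rw [hval, Complex.sub_re, Complex.re_ofReal_mul, Complex.ofReal_re] at hmain
    have hlog : Real.log (4 * M) = Real.log (12 * C ^ 2) + 2 * η * ℓ := by
      rw [hM, show 4 * (3 * C ^ 2 * Real.exp (2 * η * ℓ)) = 12 * C ^ 2 * Real.exp (2 * η * ℓ) by ring,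
        Real.log_mul (by positivity) (by positivity), Real.log_exp]
    rw [hlog] at hmain
    linarith
  -- `χ` is real, so `L(1 - z)` and `L(1 + z)` are conjugate for `z` purely imaginary.
  · intro z h1 _
    have hz : 1 - z = (starRingEnd ℂ) (1 + z) := by
      apply Complex.ext <;> simp [h1]
    have hconj : ‖L (1 - z)‖ = ‖L (1 + z)‖ := by
      rw [hz, hL, LFunction_conj hχ1 hB hreal (by simp [h1]), RCLike.norm_conj]
    rw [hG]
    simp only [norm_mul, norm_div, hexp, h1]
    rw [hconj, div_self]
    · simp
    · exact norm_ne_zero_iff.mpr (hLne _ (by simp [h1]))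
  · intro z h1 h2
    have hx : z.re ≤ 1 / 2 := h2 ▸ Complex.re_le_norm z
    have hl := hleft z h1.le h2
    have hr := one_le_norm_LFunction_mul χ (s := 1 + z) (by simpa using h1)
    have hr' : 1 / ‖L (1 + z)‖ ≤ 2 / z.re := by
      have hp : 0 < ‖L (1 + z)‖ := norm_pos_iff.mpr (hLne _ (by simpa using h1.le))
      rw [div_le_div_iff₀ hp h1]
      have he : (1 + z).re - 1 = z.re := by simp
      rw [he] at hr
      have : z.re ≤ ‖L (1 + z)‖ * (z.re + 1) := by
        calc z.re = 1 * z.re := (one_mul _).symm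
          _ ≤ ‖L (1 + z)‖ * (1 + 1 / z.re) * z.re := by gcongr
          _ = _ := by field_simp
      nlinarith
    rw [hG]
    simp only [norm_mul, norm_div, hexp]
    calc ‖L (1 - z)‖ / ‖L (1 + z)‖ * Real.exp (-(z.re / 2 * ℓ))
        = ‖L (1 - z)‖ * (1 / ‖L (1 + z)‖) * Real.exp (-(z.re / 2 * ℓ)) := by ring
      _ ≤ (3 / 2 * C ^ 2 * Real.exp ((z.re / 2 + 2 * η) * ℓ)) * (2 / z.re) *
          Real.exp (-(z.re / 2 * ℓ)) := by gcongr
      _ = M / z.re := by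
        rw [hM, show (z.re / 2 + 2 * η) * ℓ = 2 * η * ℓ + z.re / 2 * ℓ by ring, Real.exp_add,
          Real.exp_neg]
        field_simp
  · rw [hG]
    simp [hL1]

theorem thm4 :
    ∀ ε : ℝ, 0 < ε → ∃ X : ℝ, 0 < X ∧
      ∀ D : ℤ, IsFundamentalNegDiscriminant D → X ≤ (Int.natAbs D : ℝ) →
      ∀ [NeZero (Int.natAbs D)],
      ∀ χD : DirichletCharacter ℂ (Int.natAbs D), IsKroneckerChar D χD →
        (1 / 2) * Real.log (Int.natAbs D) + (deriv χD.LFunction 1 / χD.LFunction 1).re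
          ≥ (1 / 4 - ε) * Real.log (Int.natAbs D) := by
  intro ε hε
  set η : ℝ := min (ε / 48) (1 / 2) with hη
  have hη0 : 0 < η := by positivity
  have hη1 : η ≤ ε / 48 := min_le_left _ _
  have hη2 : η ≤ 1 / 2 := min_le_right _ _
  set K : ℝ := 24 * Real.log (12 * (1 + 1 / η) ^ 2) + 12 with hK
  refine ⟨max 2 (Real.exp (K / ε)), by positivity, ?_⟩
  intro D _ hX _ χ ⟨hval, hprim, hodd⟩
  have hN2 : (2 : ℝ) ≤ D.natAbs := (le_max_left _ _).trans hX
  have hN : 1 < D.natAbs := by exact_mod_cast hN2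
  have hlogN : K / ε ≤ Real.log D.natAbs :=
    (Real.le_log_iff_exp_le (by linarith)).mpr ((le_max_right _ _).trans hX)
  have hKN : K ≤ Real.log D.natAbs * ε := (div_le_iff₀ hε).mp hlogN
  have hlog0 : 0 ≤ Real.log D.natAbs := Real.log_nonneg (by linarith)
  have hχ1 : χ ≠ 1 := by
    rintro rfl
    rw [MulChar.one_apply isUnit_one.neg] at hodd
    norm_num at hodd
  have hinv : χ⁻¹ = χ := by
    ext u
    rw [MulChar.inv_apply_eq_inv']
    rcases hval u with h | h | h <;> rw [h] <;> norm_num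
  have hreal : ∀ n, (starRingEnd ℂ) (χ n) = χ n := by
    intro n
    rcases hval n with h | h | h <;> rw [h] <;> simp
  have h := neg_deriv_le hN hprim hχ1 hinv hreal hη0 hη2
  rw [← hK] at h
  have h2 : 48 * η * Real.log D.natAbs ≤ ε * Real.log D.natAbs := by gcongr; linarith
  linarith

end
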